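/- Let G be a 4-regular graph with girth g and 𝒢 the derived 3-regular disk graph. Then any g−1 disk erasures in 𝒢 can be recovered, and there exists a set of g disks whose erasure cannot be recovered. -/

import Mathlib

/-!
Vertices of `𝒢` are the edges of `G` (via `ends`), and the disk of `v` is a path on the four
vertices of `𝒢` whose `ends` contain `v`. Both halves are counting arguments resting on
`exists_isCycle_of_card_le`: in any graph, a set of at least `n` edges spanned by `n > 0` vertices
contains a cycle, since a forest on `n` vertices has fewer than `n` edges.

* If a cycle `c` of `𝒢` is covered by the disks of `T`, let `S ⊆ T` be the set of `v` whose disk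
  meets `c`. The edges of `c` inside one disk form a nonempty part of a path, so they have two
  leaves (`exists_two_leaves`). At a leaf, `c` continues into another disk, so the leaf is an edge
  of `G` joining two vertices of `S`. Hence `G[S]` has minimum degree at least two, so it contains
  a cycle, of length at most `#S ≤ #T`; thus `g ≤ #T`.
* Let `T` be the vertex set of a shortest cycle of `G`, so `#T = g`. The disks of `T` have `3 * g`
  edges in total. They span the edges of `G` meeting `T`; counting incidences gives `4 * g`, and
  the `g` edges of the cycle are counted twice, so at most `3 * g` vertices of `𝒢` are spanned, and
  the disks contain a cycle.
-/

open SimpleGraph Finset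

/-- A set `E` of edges with all endpoints in a nonempty vertex set `s` and `#s ≤ #E` contains a
cycle: otherwise `E` extends to a tree on `s`, which has only `#s - 1` edges. -/
lemma exists_isCycle_of_card_le {U : Type*} [DecidableEq U]
    (G : SimpleGraph U) (s : Finset U) (E : Finset (Sym2 U)) (hs : s.Nonempty)
    (hEG : ∀ e ∈ E, e ∈ G.edgeSet) (hEs : ∀ e ∈ E, ∀ x ∈ e, x ∈ s) (hcard : #s ≤ #E) :
    ∃ (w : U) (c : G.Walk w w), c.IsCycle ∧ c.length ≤ #s ∧ ∀ e ∈ c.edges, e ∈ E := by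
  classical
  let H : SimpleGraph s := (fromEdgeSet (E : Set (Sym2 U))).comap Subtype.val
  have hHE : ∀ {x y : s}, H.Adj x y → s(x.1, y.1) ∈ E := by
    intro x y h
    simpa using (show (fromEdgeSet (E : Set (Sym2 U))).Adj x y from h).1
  have : Nonempty s := hs.to_subtype
  have hnot : ¬ H.IsAcyclic := by
    intro hH
    obtain ⟨F, hHF, -, hF⟩ :=
      (connected_top (V := s)).exists_isTree_le_of_le_of_isAcyclic le_top hH
    have h1 := hF.card_edgeFinset
    have h2 : E ⊆ F.edgeFinset.image (Sym2.map Subtype.val) := by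
      intro e he
      induction e using Sym2.ind with
      | _ x y =>
        have hne : x ≠ y := (hEG _ he : G.Adj x y).ne
        refine mem_image.2 ⟨s(⟨x, hEs _ he x (by simp)⟩, ⟨y, hEs _ he y (by simp)⟩), ?_, by simp⟩
        rw [mem_edgeFinset]
        exact hHF (by simp [H, he, hne])
    have h3 := (card_le_card h2).trans card_image_le
    simp at h1
    omega
  simp only [IsAcyclic, not_forall, not_not] at hnot
  obtain ⟨w, c, hc⟩ := hnot
  let f : H →g G := ⟨Subtype.val, fun h => hEG _ (hHE h)⟩
  refine ⟨f w, c.map f, hc.map Subtype.val_injective, ?_, ?_⟩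
  · have := hc.support_nodup.length_le_card
    simpa using this
  · intro e he
    rw [Walk.edges_map, List.mem_map] at he
    obtain ⟨e, he, rfl⟩ := he
    have := c.edges_subset_edgeSet he
    induction e using Sym2.ind with
    | _ x y => exact hHE this

lemma exists_other_edge {U : Type*} {G : SimpleGraph U} {w : U} {c : G.Walk w w} (hc : c.IsCycle)
    {x : U} {e : Sym2 U} (he : e ∈ c.edges) (hx : x ∈ e) : ∃ f ∈ c.edges, f ≠ e ∧ x ∈ f := by
  classical
  obtain ⟨y, rfl⟩ := hx
  have h2 := hc.ncard_neighborSet_toSubgraph_eq_two (c.fst_mem_support_of_mem_edges he)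
  obtain ⟨z, hz, hzy⟩ := Set.exists_ne_of_one_lt_ncard (by rw [h2]; omega) y
  exact ⟨s(x, z), c.mem_edges_toSubgraph.1 hz, fun h => hzy (Sym2.congr_right.1 h), by simp⟩

/-- A disk, given as a path of length three, written out through its four vertices. -/
lemma exists_path_vertices {V W : Type*} [DecidableEq W] {𝒢 : SimpleGraph W}
    {ends : W → Sym2 V} {v : V} {D : Finset (Sym2 W)}
    (h : ∃ (a b : W) (p : 𝒢.Walk a b), p.IsPath ∧ p.length = 3 ∧
      p.edges.toFinset = D ∧
      (∀ x ∈ p.support, v ∈ ends x) ∧ (∀ x : W, v ∈ ends x → x ∈ p.support)) :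
    ∃ a b c d : W, [a, b, c, d].Nodup ∧ D = {s(a, b), s(b, c), s(c, d)} ∧
      ∀ x, v ∈ ends x ↔ x ∈ ({a, b, c, d} : Finset W) := by
  obtain ⟨a, d, p, hp, hl, rfl, h1, h2⟩ := h
  match p, hl with
  | .cons (v := b) _ (.cons (v := c) _ (.cons _ .nil)), _ =>
    refine ⟨a, b, c, d, by simpa using hp.support_nodup, by ext; simp, fun x => ?_⟩
    exact ⟨fun h => by simpa using h2 x h, fun h => h1 x (by simpa using h)⟩

/-- A nonempty set of edges of a path on four vertices has two distinct leaves, that is, vertices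
lying on exactly one edge of the set. -/
lemma exists_two_leaves {W : Type*} [DecidableEq W] {a b c d : W} (hn : [a, b, c, d].Nodup)
    (P : Sym2 W → Prop) {D : Finset (Sym2 W)} (hD : D = {s(a, b), s(b, c), s(c, d)})
    (h : ∃ e ∈ D, P e) :
    ∃ x y, x ≠ y ∧ (∃ e ∈ D, P e ∧ x ∈ e ∧ ∀ f ∈ D, P f → x ∈ f → f = e) ∧
      (∃ e ∈ D, P e ∧ y ∈ e ∧ ∀ f ∈ D, P f → y ∈ f → f = e) := by
  subst hD
  simp only [List.nodup_cons, List.mem_cons, List.not_mem_nil, or_false, not_or] at hn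
  obtain ⟨⟨hab, hac, had⟩, ⟨hbc, hbd⟩, hcd, -⟩ := hn
  simp only [mem_insert, mem_singleton, exists_eq_or_imp, exists_eq_left, forall_eq_or_imp,
    forall_eq] at h ⊢
  by_cases p1 : P s(a, b) <;> by_cases p2 : P s(b, c) <;> by_cases p3 : P s(c, d)
  · refine ⟨a, d, ?_⟩; grind
  · refine ⟨a, c, ?_⟩; grind
  · refine ⟨a, b, ?_⟩; grind
  · refine ⟨a, b, ?_⟩; grind
  · refine ⟨b, d, ?_⟩; grind
  · refine ⟨b, c, ?_⟩; grind
  · refine ⟨c, d, ?_⟩; grind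
  · grind

/-- For the 3-regular disk graph `𝒢` derived from a 4-regular graph `G` of girth `g`
(a set of erased disks being recoverable iff the union of their edges contains no
cycle of `𝒢`): any `g - 1` disk erasures are recoverable, and some set of `g` disks
cannot be recovered. -/
theorem disk_erasure_recovery_bound {V W : Type*} [Fintype V] [Fintype W]
    [DecidableEq V] [DecidableEq W]
    (G : SimpleGraph V) [DecidableRel G.Adj] (𝒢 : SimpleGraph W) [DecidableRel 𝒢.Adj]
    (hG4 : G.IsRegularOfDegree 4) (hG3 : 𝒢.IsRegularOfDegree 3)
    (ends : W → Sym2 V) (hends : ∀ x : W, ends x ∈ G.edgeSet)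
    (hinj : Function.Injective ends)
    (hsurj : ∀ e ∈ G.edgeSet, ∃ x : W, ends x = e)
    (Disk : V → Finset (Sym2 W))
    (hdisj : Set.univ.PairwiseDisjoint Disk)
    (hcover : Finset.univ.biUnion Disk = 𝒢.edgeFinset)
    (hdisk : ∀ v : V, ∃ (a b : W) (p : 𝒢.Walk a b), p.IsPath ∧ p.length = 3 ∧
      p.edges.toFinset = Disk v ∧
      (∀ x ∈ p.support, v ∈ ends x) ∧ (∀ x : W, v ∈ ends x → x ∈ p.support))
    (g : ℕ) (hg : G.girth = g) (hacyc : ¬ G.IsAcyclic) :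
    (∀ T : Finset V, T.card ≤ g - 1 →
      ∀ (w : W) (c : 𝒢.Walk w w), c.IsCycle →
        ¬ ∀ e ∈ c.edges, ∃ v ∈ T, e ∈ Disk v) ∧
    (∃ T : Finset V, T.card = g ∧
      ∃ (w : W) (c : 𝒢.Walk w w), c.IsCycle ∧ ∀ e ∈ c.edges, ∃ v ∈ T, e ∈ Disk v) := by
  have hg3 : 3 ≤ g := hg ▸ three_le_girth hacyc
  have hpath := fun v => exists_path_vertices (hdisk v)
  have hmemD : ∀ {v : V} {e : Sym2 W} {x : W}, e ∈ Disk v → x ∈ e → v ∈ ends x := by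
    intro v e x he hx
    obtain ⟨a, b, c, d, -, hD, hsup⟩ := hpath v
    rw [hsup]
    rw [hD] at he
    simp only [mem_insert, mem_singleton] at he
    rcases he with rfl | rfl | rfl <;> simp at hx ⊢ <;> tauto
  have hcard2 : ∀ (S : Finset V) (x : W), #{v ∈ S | v ∈ ends x} ≤ 2 := by
    intro S x
    induction h : ends x using Sym2.ind with
    | _ u v =>
      refine (card_le_card (t := {u, v}) ?_).trans card_le_two
      intro z; simp
  have hDcycle : ∀ v e, e ∈ Disk v → e ∈ 𝒢.edgeSet := by
    intro v e he
    rw [← mem_edgeFinset, ← hcover]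
    exact mem_biUnion.2 ⟨v, mem_univ _, he⟩
  constructor
  · intro T hT w c hc hcT
    set S : Finset V := {v ∈ T | ∃ e ∈ Disk v, e ∈ c.edges} with hS
    set Y : Finset W := {x | ∀ v ∈ ends x, v ∈ S} with hY
    -- A leaf of `c ∩ Disk v` joins `v` to another vertex of `S`: `c` leaves it through another disk.
    have hleaf : ∀ v ∈ S, ∀ x, (∃ e ∈ Disk v, e ∈ c.edges ∧ x ∈ e ∧
        ∀ f ∈ Disk v, f ∈ c.edges → x ∈ f → f = e) → x ∈ Y ∧ v ∈ ends x := by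
      rintro v hv x ⟨e, heD, hec, hxe, huniq⟩
      obtain ⟨f, hfc, hfe, hxf⟩ := exists_other_edge hc hec hxe
      obtain ⟨u, huT, hfu⟩ := hcT f hfc
      have huv : u ≠ v := by
        rintro rfl
        exact hfe (huniq f hfu hfc hxf)
      have h1 := hmemD heD hxe
      have h2 := hmemD hfu hxf
      have huS : u ∈ S := by simp only [hS, mem_filter]; exact ⟨huT, f, hfu, hfc⟩
      refine ⟨?_, h1⟩
      simp only [hY, mem_filter, mem_univ, true_and]
      rw [(Sym2.mem_and_mem_iff huv).1 ⟨h2, h1⟩]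
      intro z hz
      rcases Sym2.mem_iff.1 hz with rfl | rfl <;> assumption
    have hlow : ∀ v ∈ S, 2 ≤ #{x ∈ Y | v ∈ ends x} := by
      intro v hv
      obtain ⟨a, b, c', d, hn, hD, -⟩ := hpath v
      obtain ⟨x, y, hxy, hx, hy⟩ := exists_two_leaves hn (· ∈ c.edges) hD (mem_filter.1 hv).2
      exact one_lt_card.2 ⟨x, mem_filter.2 (hleaf v hv x hx), y,
        mem_filter.2 (hleaf v hv y hy), hxy⟩
    have hSne : S.Nonempty := by
      obtain ⟨e, he⟩ := List.exists_mem_of_ne_nil c.edges (by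
        simpa using hc.ne_nil)
      obtain ⟨v, hv, hev⟩ := hcT e he
      exact ⟨v, mem_filter.2 ⟨hv, e, hev, he⟩⟩
    -- Double counting of incidences between `S` and the edges of `G[S]`.
    have hSY : #S ≤ #Y := by
      have h := sum_card_bipartiteAbove_eq_sum_card_bipartiteBelow (s := S) (t := Y)
        (fun v x => v ∈ ends x)
      have h1 := card_nsmul_le_sum S _ 2 hlow
      have h2 := sum_le_card_nsmul Y _ 2 (fun x _ => hcard2 S x)
      simp only [bipartiteAbove, bipartiteBelow, smul_eq_mul] at h h1 h2
      omega
    obtain ⟨z, c', hc', hlen, -⟩ := exists_isCycle_of_card_le G S (Y.image ends) hSne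
      (by simpa using fun x _ => hends x)
      (by simp [hY]) (by rwa [card_image_of_injective _ hinj])
    have h1 := girth_le_length hc'
    have h2 : #S ≤ #T := card_filter_le _ _
    omega
  · obtain ⟨u, c, hc, hlen⟩ := exists_girth_eq_length.2 hacyc
    -- The support lists the base point twice, so its tail is taken.
    set T : Finset V := c.support.tail.toFinset with hTdef
    have hT : #T = g := by
      rw [List.toFinset_card_of_nodup hc.support_nodup]
      simp; omega
    have hTmem : ∀ v ∈ c.support, v ∈ T := by
      intro v hv
      rw [← c.cons_tail_support, List.mem_cons] at hv
      rcases hv with rfl | hv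
      · exact List.mem_toFinset.2 (Walk.end_mem_tail_support hc.not_nil)
      · exact List.mem_toFinset.2 hv
    set X : Finset W := {x | ∃ v ∈ T, v ∈ ends x} with hX
    set Y : Finset W := {x | ends x ∈ c.edges} with hY
    have hYX : Y ⊆ X := by
      intro x hx
      have hxc := (mem_filter.1 hx).2
      induction h : ends x using Sym2.ind with
      | _ p q =>
        rw [h] at hxc
        exact mem_filter.2 ⟨mem_univ _, p, hTmem p (c.fst_mem_support_of_mem_edges hxc),
          by simp [h]⟩
    have hYcard : #Y = g := by
      rw [← card_image_of_injective Y hinj]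
      have : Y.image ends = c.edges.toFinset := by
        ext e
        simp only [hY, mem_image, mem_filter, mem_univ, true_and, List.mem_toFinset]
        constructor
        · rintro ⟨x, hx, rfl⟩; exact hx
        · intro he
          obtain ⟨x, rfl⟩ := hsurj e (c.edges_subset_edgeSet he)
          exact ⟨x, he, rfl⟩
      rw [this, List.toFinset_card_of_nodup hc.edges_nodup, Walk.length_edges]; omega
    have hfour : ∀ v ∈ T, #{x ∈ X | v ∈ ends x} = 4 := by
      intro v hv
      obtain ⟨a, b, c', d, hn, -, hsup⟩ := hpath v
      have : ({x ∈ X | v ∈ ends x} : Finset W) = [a, b, c', d].toFinset := by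
        ext x
        have hx := hsup x
        simp only [hX, mem_filter, mem_univ, true_and, List.mem_toFinset, mem_insert,
          mem_singleton, List.mem_cons, List.not_mem_nil, or_false] at hx ⊢
        rw [← hx]
        exact ⟨And.right, fun h => ⟨⟨v, hv, h⟩, h⟩⟩
      rw [this, List.toFinset_card_of_nodup hn]; rfl
    have hthree : ∀ v ∈ T, #(Disk v) = 3 := by
      intro v hv
      obtain ⟨a, b, p, hp, hl, hD, -⟩ := hdisk v
      rw [← hD, List.toFinset_card_of_nodup hp.isTrail.edges_nodup, Walk.length_edges, hl]
    -- Each vertex of `X` lies in a disk of `T`, and each vertex of `Y` in two of them.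
    have hXcard : #X ≤ 3 * g := by
      have h := sum_card_bipartiteAbove_eq_sum_card_bipartiteBelow (s := T) (t := X)
        (fun v x => v ∈ ends x)
      simp only [bipartiteAbove, bipartiteBelow] at h
      rw [sum_congr rfl hfour, sum_const, hT] at h
      have h2 : ∑ x ∈ X, (1 + if x ∈ Y then 1 else 0) ≤ ∑ x ∈ X, #{v ∈ T | v ∈ ends x} := by
        refine sum_le_sum fun x hx => ?_
        split_ifs with hxY
        · obtain hxY := (mem_filter.1 hxY).2
          have hE := hends x
          induction he : ends x using Sym2.ind with
          | _ p q =>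
            rw [he] at hxY hE
            exact one_lt_card.2 ⟨p, by simp [hTmem p (c.fst_mem_support_of_mem_edges hxY)], q,
              by simp [hTmem q (c.snd_mem_support_of_mem_edges hxY)], (hE : G.Adj p q).ne⟩
        · obtain ⟨v, hv⟩ := (mem_filter.1 hx).2
          exact card_pos.2 ⟨v, mem_filter.2 hv⟩
      rw [sum_add_distrib, ← card_eq_sum_ones, sum_ite_mem, inter_eq_right.2 hYX,
        ← card_eq_sum_ones, hYcard] at h2
      simp only [smul_eq_mul] at h
      omega
    have hEcard : #(T.biUnion Disk) = 3 * g := by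
      rw [card_biUnion fun v _ u _ huv => hdisj (Set.mem_univ v) (Set.mem_univ u) huv,
        sum_congr rfl hthree, sum_const, hT, smul_eq_mul, mul_comm]
    have hXne : X.Nonempty := (card_pos.1 (by omega : 0 < #Y)).mono hYX
    obtain ⟨w, c', hc', -, hE⟩ := exists_isCycle_of_card_le 𝒢 X (T.biUnion Disk) hXne
      (by
        intro e he
        obtain ⟨v, -, hv⟩ := mem_biUnion.1 he
        exact hDcycle v e hv)
      (by
        intro e he x hx
        obtain ⟨v, hvT, hv⟩ := mem_biUnion.1 he
        exact mem_filter.2 ⟨mem_univ _, v, hvT, hmemD hv hx⟩)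
      (by omega)
    exact ⟨T, hT, w, c', hc', fun e he => mem_biUnion.1 (hE e he)⟩
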